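/- Let n ≥ k, d ≥ k, and let R ∈ ℝ^{n×d} be a random matrix whose entries are independent Gaussian random variables with mean 0 and variance 1/d. For every t ≥ 0, with probability at least 1 − exp(−t²/2), every minimizer X over 𝒳 of the k-means cost on Ψ = H R satisfies C_Φ ≤ ‖Φ − X Xᵀ Φ‖_F ≤ C_Φ + 2·√(k/d)·(√k + t) (the lower bound C_Φ ≤ ‖Φ − X Xᵀ Φ‖_F holds surely). -/

import Mathlib

open Matrix MeasureTheory ProbabilityTheory Finset

noncomputable section

/-- The `a × b` matrix with ones on the main diagonal and zeros elsewhere. -/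
def rectId (a b : ℕ) : Matrix (Fin a) (Fin b) ℝ :=
  Matrix.of fun i j => if (i : ℕ) = (j : ℕ) then 1 else 0

/-- Frobenius norm of a real matrix. -/
def frob {a b : ℕ} (M : Matrix (Fin a) (Fin b) ℝ) : ℝ :=
  Real.sqrt (∑ i, ∑ j, (M i j) ^ 2)

/-- Euclidean norm of a vector. -/
def enorm2 {a : ℕ} (v : Fin a → ℝ) : ℝ :=
  Real.sqrt (∑ i, (v i) ^ 2)

/-- `X` is the cluster-indicator matrix of the partition of `Fin n` into the
(nonempty) fibers of the surjective map `f : Fin n → Fin k`. -/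
def IsIndicatorOf {n k : ℕ} (f : Fin n → Fin k) (X : Matrix (Fin n) (Fin k) ℝ) : Prop :=
  Function.Surjective f ∧
    ∀ i j, X i j =
      if f i = j then 1 / Real.sqrt ((Finset.univ.filter fun i' => f i' = j).card) else 0

/-- `X` is a cluster-indicator matrix of a partition into `k` nonempty clusters. -/
def IsIndicator {n k : ℕ} (X : Matrix (Fin n) (Fin k) ℝ) : Prop :=
  ∃ f : Fin n → Fin k, IsIndicatorOf f X

/-- The k-means cost of the assignment `X` on the feature matrix `M`. -/
def kmeansCost {n k m : ℕ} (M : Matrix (Fin n) (Fin m) ℝ)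
    (X : Matrix (Fin n) (Fin k) ℝ) : ℝ :=
  frob (M - X * Xᵀ * M)

/-- `X` minimizes the k-means cost on features `M` over all indicator matrices. -/
def IsOptAssign {n k m : ℕ} (M : Matrix (Fin n) (Fin m) ℝ)
    (X : Matrix (Fin n) (Fin k) ℝ) : Prop :=
  IsIndicator X ∧
    ∀ Y : Matrix (Fin n) (Fin k) ℝ, IsIndicator Y → kmeansCost M X ≤ kmeansCost M Y

/-- Law of an `n × d` random matrix with i.i.d. Gaussian entries of
mean `0` and variance `1 / d`. -/
def gaussMeasure (n d : ℕ) : Measure (Fin n → Fin d → ℝ) :=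
  Measure.pi fun _ => Measure.pi fun _ => gaussianReal 0 (d : NNReal)⁻¹

/-!
Projecting `Φ` to `ΦΦᵀR` perturbs all k-means costs simultaneously. The deviation functional
`costDeviation` of `R`, a supremum over the finitely many indicator matrices, bounds the excess
`‖Φ - XXᵀΦ‖ - C_Φ` of every minimizer `X` for `ΦΦᵀR`, and it is `2`-Lipschitz in the Frobenius norm.

*Mean.* The cost of `X` drops by at most `‖(ΦᵀR)(ΦᵀR)ᵀ - 1‖`, whatever `X` is, and the entries of
this Gram error have second moment at most `3/d`. The cost of the reference assignment does not
increase on average, by Jensen's inequality, since `E ‖AR‖² = ‖A‖²`. Hence the mean is at most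
`2k/√d = 2√(k/d)√k`.

*Concentration.* The Gaussian measure has Maurey's property (τ) for the cost `d/4 ‖R - S‖²`: in
dimension one this is the Prékopa–Leindler inequality, and the property tensorizes. It gives
sub-Gaussian tails for Lipschitz functions, with a variance proxy twice the optimal one, so that the
deviation functional exceeds its mean by `2√(k/d)t` with probability at most `exp(-k t²/4)`. This is
at most `exp(-t²/2)` when `2 ≤ k`, and for `k ≤ 1` there is only one indicator matrix.
-/

open scoped ENNReal NNReal Pointwise

/-! ### The one-dimensional Prékopa–Leindler inequality -/

lemma volume_add_le_volume_add_of_isCompact {A B : Set ℝ} (hA : IsCompact A) (hB : IsCompact B)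
    (hA₀ : A.Nonempty) (hB₀ : B.Nonempty) : volume A + volume B ≤ volume (A + B) := by
  obtain ⟨a, haA, ha⟩ := hA.exists_isGreatest hA₀
  obtain ⟨b, hbB, hb⟩ := hB.exists_isLeast hB₀
  have hmeet : (A + {b}) ∩ ({a} + B) ⊆ {a + b} := by
    simp only [Set.add_singleton, Set.singleton_add]
    rintro _ ⟨⟨x, hx, rfl⟩, y, hy, hxy⟩
    have := ha hx
    have := hb hy
    simp only [Set.mem_singleton_iff] at hxy ⊢
    linarith
  have hdisj : AEDisjoint volume (A + {b}) ({a} + B) :=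
    measure_mono_null hmeet Real.volume_singleton
  calc volume A + volume B = volume (A + {b}) + volume ({a} + B) := by
        simp only [Set.add_singleton, Set.singleton_add, Set.image_add_right, Set.image_add_left,
          measure_preimage_add, measure_preimage_add_right]
    _ = volume ((A + {b}) ∪ ({a} + B)) :=
        (measure_union₀ (isCompact_singleton.add hB).nullMeasurableSet hdisj).symm
    _ ≤ volume (A + B) := by
        gcongr
        exact Set.union_subset (Set.add_subset_add_left (Set.singleton_subset_iff.2 hbB))
          (Set.add_subset_add_right (Set.singleton_subset_iff.2 haA))

lemma volume_add_le_volume_add {A B : Set ℝ} (hA : MeasurableSet A) (hB : MeasurableSet B)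
    (hA₀ : A.Nonempty) (hB₀ : B.Nonempty) : volume A + volume B ≤ volume (A + B) := by
  obtain ⟨a, ha⟩ := hA₀
  obtain ⟨b, hb⟩ := hB₀
  simp only [hA.measure_eq_iSup_isCompact, hB.measure_eq_iSup_isCompact, iSup_and']
  refine ENNReal.biSup_add_biSup_le' ⟨∅, Set.empty_subset A, isCompact_empty⟩
    ⟨∅, Set.empty_subset B, isCompact_empty⟩ fun K hK L hL => ?_
  calc volume K + volume L ≤ volume (insert a K) + volume (insert b L) := by
        gcongr <;> exact Set.subset_insert _ _
    _ ≤ volume (insert a K + insert b L) :=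
        volume_add_le_volume_add_of_isCompact (hK.2.insert a) (hL.2.insert b)
          (Set.insert_nonempty a K) (Set.insert_nonempty b L)
    _ ≤ volume (A + B) := by
        gcongr
        · exact Set.insert_subset ha hK.1
        · exact Set.insert_subset hb hL.1

lemma lintegral_eq_lintegral_measure_ofReal_lt {α : Type*} [MeasurableSpace α] (μ : Measure α)
    [SFinite μ] {f : α → ℝ≥0∞} (hf : Measurable f) :
    ∫⁻ x, f x ∂μ = ∫⁻ s in Set.Ioi (0 : ℝ), μ {x | ENNReal.ofReal s < f x} := by
  have hsub : MeasurableSet {p : ℝ × α | ENNReal.ofReal p.1 < f p.2} :=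
    measurableSet_lt (by fun_prop) (by fun_prop)
  have hfiber (b : ℝ≥0∞) : volume.restrict (Set.Ioi 0) {s : ℝ | ENNReal.ofReal s < b} = b := by
    rw [Measure.restrict_apply (measurableSet_lt (by fun_prop) (by fun_prop))]
    cases b with
    | top => simp
    | coe b =>
      have : {s : ℝ | ENNReal.ofReal s < b} ∩ Set.Ioi 0 = Set.Ioo 0 (b : ℝ) := by
        ext s
        simp only [Set.mem_inter_iff, Set.mem_ofPred_eq, Set.mem_Ioi, Set.mem_Ioo]
        rw [and_comm]
        refine and_congr_right fun hs => ?_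
        rw [ENNReal.ofReal_lt_iff_lt_toReal hs.le ENNReal.coe_ne_top, ENNReal.coe_toReal]
      rw [this, Real.volume_Ioo, sub_zero, ENNReal.ofReal_coe_nnreal]
  have hprod :=
    (Measure.prod_apply_symm (μ := volume.restrict (Set.Ioi 0)) (ν := μ) hsub).symm.trans
      (Measure.prod_apply hsub)
  simpa only [Set.preimage_ofPred_eq, hfiber] using hprod

lemma volume_superlevel_add_le {f g h : ℝ → ℝ≥0∞} (hf : Measurable f) (hg : Measurable g)
    (hfgh : ∀ x y, f x * g y ≤ h ((x + y) / 2) ^ 2) {s : ℝ≥0∞}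
    (hsf : ∃ x, s < f x) (hsg : ∃ y, s < g y) :
    volume {x | s < f x} + volume {y | s < g y} ≤ 2 * volume {z | s < h z} := by
  have hsub : {x | s < f x} + {y | s < g y} ⊆ (2 : ℝ) • {z | s < h z} := by
    rintro _ ⟨x, hx, y, hy, rfl⟩
    refine ⟨(x + y) / 2, ?_, by simp; ring⟩
    have hsq : s ^ 2 < h ((x + y) / 2) ^ 2 := calc
      s ^ 2 = s * s := sq s
      _ < f x * g y := ENNReal.mul_lt_mul hx hy
      _ ≤ h ((x + y) / 2) ^ 2 := hfgh x y
    exact lt_of_not_ge fun hle => hsq.not_ge (pow_le_pow_left' hle 2)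
  calc volume {x | s < f x} + volume {y | s < g y}
      ≤ volume ({x | s < f x} + {y | s < g y}) :=
        volume_add_le_volume_add (measurableSet_lt measurable_const hf)
          (measurableSet_lt measurable_const hg) hsf hsg
    _ ≤ volume ((2 : ℝ) • {z | s < h z}) := measure_mono hsub
    _ = 2 * volume {z | s < h z} := by
        rw [Measure.addHaar_smul]
        simp

lemma lintegral_add_le_of_iSup_eq_one {f g h : ℝ → ℝ≥0∞} (hf : Measurable f) (hg : Measurable g)
    (hh : Measurable h) (hfgh : ∀ x y, f x * g y ≤ h ((x + y) / 2) ^ 2)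
    (hf₁ : ⨆ x, f x = 1) (hg₁ : ⨆ y, g y = 1) :
    (∫⁻ x, f x) + ∫⁻ y, g y ≤ 2 * ∫⁻ z, h z := by
  have hmeas {F : ℝ → ℝ≥0∞} : Measurable fun s : ℝ => volume {x | ENNReal.ofReal s < F x} :=
    Antitone.measurable fun s t hst => measure_mono fun x hx =>
      (ENNReal.ofReal_le_ofReal hst).trans_lt hx
  rw [lintegral_eq_lintegral_measure_ofReal_lt volume hf,
    lintegral_eq_lintegral_measure_ofReal_lt volume hg,
    lintegral_eq_lintegral_measure_ofReal_lt volume hh, ← lintegral_add_left hmeas,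
    ← lintegral_const_mul _ hmeas]
  refine lintegral_mono fun s => ?_
  obtain hs | hs := lt_or_ge (ENNReal.ofReal s) 1
  · exact volume_superlevel_add_le hf hg hfgh (lt_iSup_iff.1 (hf₁ ▸ hs)) (lt_iSup_iff.1 (hg₁ ▸ hs))
  · have hempty {F : ℝ → ℝ≥0∞} (hF : ⨆ x, F x = 1) : {x | ENNReal.ofReal s < F x} = ∅ :=
      Set.eq_empty_of_forall_notMem fun x hx =>
        hx.not_ge ((hF ▸ le_iSup F x : F x ≤ 1).trans hs)
    simp [hempty hf₁, hempty hg₁]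

lemma ennreal_mul_le_sq_of_add_le_two_mul {a b c : ℝ≥0∞} (h : a + b ≤ 2 * c) : a * b ≤ c ^ 2 := by
  wlog hab : a ≤ b generalizing a b
  · exact mul_comm a b ▸ this (add_comm a b ▸ h) (le_of_not_ge hab)
  obtain ⟨d, rfl⟩ := exists_add_of_le hab
  refine (ENNReal.mul_le_mul_iff_right (a := 4) (by simp) (by simp)).1 ?_
  calc 4 * (a * (a + d)) ≤ 4 * (a * (a + d)) + d ^ 2 := le_self_add
    _ = (a + (a + d)) ^ 2 := by ring
    _ ≤ (2 * c) ^ 2 := by gcongr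
    _ = 4 * c ^ 2 := by ring

lemma prekopa_leindler_of_iSup_ne_top {f g h : ℝ → ℝ≥0∞} (hf : Measurable f) (hg : Measurable g)
    (hh : Measurable h) (hfgh : ∀ x y, f x * g y ≤ h ((x + y) / 2) ^ 2)
    (hf_top : ⨆ x, f x ≠ ∞) (hg_top : ⨆ y, g y ≠ ∞) :
    (∫⁻ x, f x) * ∫⁻ y, g y ≤ (∫⁻ z, h z) ^ 2 := by
  obtain hf₀ | hf₀ := eq_or_ne (⨆ x, f x) 0
  · simp [ENNReal.iSup_eq_zero.1 hf₀]
  obtain hg₀ | hg₀ := eq_or_ne (⨆ y, g y) 0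
  · simp [ENNReal.iSup_eq_zero.1 hg₀]
  set a := ⨆ x, f x
  set b := ⨆ y, g y
  set c : ℝ≥0∞ := (a⁻¹ * b⁻¹) ^ (1 / 2 : ℝ)
  have hc : c ^ 2 = a⁻¹ * b⁻¹ := by
    rw [← ENNReal.rpow_natCast, ← ENNReal.rpow_mul]
    norm_num
  have hscaled : (∫⁻ x, a⁻¹ * f x) * ∫⁻ y, b⁻¹ * g y ≤ (∫⁻ z, c * h z) ^ 2 := by
    refine ennreal_mul_le_sq_of_add_le_two_mul <|
      lintegral_add_le_of_iSup_eq_one (by fun_prop) (by fun_prop) (by fun_prop) (fun x y => ?_)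
        (by rw [← ENNReal.mul_iSup, ENNReal.inv_mul_cancel hf₀ hf_top])
        (by rw [← ENNReal.mul_iSup, ENNReal.inv_mul_cancel hg₀ hg_top])
    rw [mul_mul_mul_comm, mul_pow, hc]
    gcongr
    exact hfgh x y
  rw [lintegral_const_mul _ hf, lintegral_const_mul _ hg, lintegral_const_mul _ hh, mul_pow, hc,
    mul_mul_mul_comm] at hscaled
  exact (ENNReal.mul_le_mul_iff_right (by simp [a, b, hf_top, hg_top])
    (by simp [ENNReal.mul_eq_top, hf₀, hg₀])).1 hscaled

lemma lintegral_eq_iSup_lintegral_min_natCast {α : Type*} [MeasurableSpace α] (μ : Measure α)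
    {f : α → ℝ≥0∞} (hf : Measurable f) : ∫⁻ x, f x ∂μ = ⨆ N : ℕ, ∫⁻ x, min (f x) N ∂μ := by
  rw [← lintegral_iSup (fun N => by fun_prop)
    fun M N hMN x => min_le_min_left (f x) (Nat.cast_le.2 hMN)]
  simp only [← inf_iSup_eq, ENNReal.iSup_natCast, inf_top_eq]

theorem prekopa_leindler {f g h : ℝ → ℝ≥0∞} (hf : Measurable f) (hg : Measurable g)
    (hh : Measurable h) (hfgh : ∀ x y, f x * g y ≤ h ((x + y) / 2) ^ 2) :
    (∫⁻ x, f x) * ∫⁻ y, g y ≤ (∫⁻ z, h z) ^ 2 := by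
  have hbdd (F : ℝ → ℝ≥0∞) (N : ℕ) : ⨆ x, min (F x) N ≠ ∞ :=
    ne_top_of_le_ne_top (ENNReal.natCast_ne_top N) (iSup_le fun x => min_le_right _ _)
  rw [lintegral_eq_iSup_lintegral_min_natCast volume hf,
    lintegral_eq_iSup_lintegral_min_natCast volume hg]
  simp only [ENNReal.iSup_mul, ENNReal.mul_iSup, iSup_le_iff]
  intro M N
  refine prekopa_leindler_of_iSup_ne_top (by fun_prop) (by fun_prop) hh (fun x y => ?_)
    (hbdd f _) (hbdd g _)
  exact (mul_le_mul' (min_le_left _ _) (min_le_left _ _)).trans (hfgh x y)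

/-! ### Property (τ) of Gaussian measures -/

/-- Maurey's property (τ) of a measure `μ` for the cost `c`. It is stated multiplicatively, for
`[0, ∞]`-valued functions, so that it tensorizes by Tonelli's theorem. -/
def HasPropertyTau {α : Type*} [MeasurableSpace α] (μ : Measure α) (c : α → α → ℝ) : Prop :=
  ∀ ⦃u w : α → ℝ≥0∞⦄, Measurable u → Measurable w →
    (∀ x y, u x * w y ≤ ENNReal.ofReal (Real.exp (c x y))) →
      (∫⁻ x, u x ∂μ) * ∫⁻ y, w y ∂μ ≤ 1

namespace HasPropertyTau

variable {α β : Type*} [MeasurableSpace α] [MeasurableSpace β] {μ : Measure α} {ν : Measure β}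
  {c : α → α → ℝ} {d : β → β → ℝ}

lemma of_measurePreserving {f : α → β} (hf : MeasurePreserving f μ ν)
    (h : HasPropertyTau μ fun x y => d (f x) (f y)) : HasPropertyTau ν d := by
  intro u w hu hw huw
  rw [← hf.lintegral_comp hu, ← hf.lintegral_comp hw]
  exact h (hu.comp hf.measurable) (hw.comp hf.measurable) fun x y => huw (f x) (f y)

lemma prod [SFinite μ] [SFinite ν] (hμ : HasPropertyTau μ c) (hν : HasPropertyTau ν d) :
    HasPropertyTau (μ.prod ν) fun p q => c p.1 q.1 + d p.2 q.2 := by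
  intro u w hu hw huw
  rw [lintegral_prod _ hu.aemeasurable, lintegral_prod _ hw.aemeasurable]
  refine hμ hu.lintegral_prod_right' hw.lintegral_prod_right' fun x x' => ?_
  set e := ENNReal.ofReal (Real.exp (c x x'))
  have he₀ : e ≠ 0 := (ENNReal.ofReal_pos.2 (Real.exp_pos _)).ne'
  have he_top : e ≠ ∞ := ENNReal.ofReal_ne_top
  have hfiber : (∫⁻ y, u (x, y) ∂ν) * ∫⁻ y', e⁻¹ * w (x', y') ∂ν ≤ 1 := by
    refine hν (by fun_prop) (by fun_prop) fun y y' => ?_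
    calc u (x, y) * (e⁻¹ * w (x', y')) = e⁻¹ * (u (x, y) * w (x', y')) := mul_left_comm _ _ _
      _ ≤ e⁻¹ * ENNReal.ofReal (Real.exp (c x x' + d y y')) := by
        gcongr
        exact huw (x, y) (x', y')
      _ = ENNReal.ofReal (Real.exp (d y y')) := by
        rw [Real.exp_add, ENNReal.ofReal_mul (Real.exp_nonneg _), ← mul_assoc,
          ENNReal.inv_mul_cancel he₀ he_top, one_mul]
  rw [lintegral_const_mul _ (by fun_prop), mul_left_comm, mul_comm, ← div_eq_mul_inv,
    ENNReal.div_le_iff he₀ he_top, one_mul] at hfiber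
  exact hfiber

lemma pi {m : ℕ} {α : Fin m → Type*} [∀ i, MeasurableSpace (α i)] {μ : ∀ i, Measure (α i)}
    [∀ i, SigmaFinite (μ i)] {c : ∀ i, α i → α i → ℝ} (h : ∀ i, HasPropertyTau (μ i) (c i)) :
    HasPropertyTau (Measure.pi μ) fun x y => ∑ i, c i (x i) (y i) := by
  induction m with
  | zero =>
    intro u w _ _ huw
    simpa [Measure.pi_of_empty μ default, lintegral_dirac] using huw default default
  | succ m ih =>
    refine of_measurePreserving (measurePreserving_piFinSuccAbove μ 0).symm ?_
    simp only [Fin.sum_univ_succ]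
    exact (h 0).prod (ih fun i => h i.succ)

end HasPropertyTau

lemma gaussianPDFReal_mul_gaussianPDFReal (m : ℝ) (v : ℝ≥0) (x y : ℝ) :
    gaussianPDFReal m v x * gaussianPDFReal m v y * Real.exp ((x - y) ^ 2 / (4 * v)) =
      gaussianPDFReal m v ((x + y) / 2) ^ 2 := by
  simp only [gaussianPDFReal, mul_pow, ← Real.exp_nat_mul]
  rw [mul_mul_mul_comm, mul_assoc, ← Real.exp_add, ← Real.exp_add, ← sq]
  congr 2
  push_cast
  ring

lemma hasPropertyTau_gaussianReal (m : ℝ) (v : ℝ≥0) :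
    HasPropertyTau (gaussianReal m v) fun x y => (x - y) ^ 2 / (4 * v) := by
  intro u w hu hw huw
  obtain rfl | hv := eq_or_ne v 0
  · simpa [gaussianReal_zero_var] using huw m m
  have hdensity {f : ℝ → ℝ≥0∞} (hf : Measurable f) :
      ∫⁻ x, f x ∂gaussianReal m v = ∫⁻ x, gaussianPDF m v x * f x := by
    rw [gaussianReal_of_var_ne_zero _ hv,
      lintegral_withDensity_eq_lintegral_mul _ (measurable_gaussianPDF m v) hf]
    rfl
  rw [hdensity hu, hdensity hw]
  refine (prekopa_leindler (h := gaussianPDF m v) (by fun_prop) (by fun_prop) (by fun_prop)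
    fun x y => ?_).trans_eq (by rw [lintegral_gaussianPDF_eq_one m hv, one_pow])
  calc gaussianPDF m v x * u x * (gaussianPDF m v y * w y) =
        gaussianPDF m v x * gaussianPDF m v y * (u x * w y) := mul_mul_mul_comm _ _ _ _
    _ ≤ gaussianPDF m v x * gaussianPDF m v y *
        ENNReal.ofReal (Real.exp ((x - y) ^ 2 / (4 * v))) := by
      gcongr
      exact huw x y
    _ = gaussianPDF m v ((x + y) / 2) ^ 2 := by
      have hpdf := gaussianPDFReal_nonneg m v
      simp only [gaussianPDF]
      rw [← ENNReal.ofReal_mul (hpdf x), ← ENNReal.ofReal_mul (mul_nonneg (hpdf x) (hpdf y)),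
        gaussianPDFReal_mul_gaussianPDFReal, ENNReal.ofReal_pow (hpdf _)]

section Concentration

variable {α : Type*} [MeasurableSpace α] {μ : Measure α} {c : α → α → ℝ} {F : α → ℝ} {K : ℝ≥0}

lemma exp_mul_integral_le_mgf [IsProbabilityMeasure μ] (s : ℝ) (hF : Integrable F μ)
    (hexp : Integrable (fun x => Real.exp (s * F x)) μ) : Real.exp (s * μ[F]) ≤ mgf F μ s := by
  rw [← integral_const_mul]
  exact convexOn_exp.map_integral_le Real.continuous_exp.continuousOn isClosed_univ
    (by simp) (hF.const_mul s) hexp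

lemma mul_sub_le_add_of_sq_sub_le {a b C : ℝ} (hC : 0 ≤ C) (h : (a - b) ^ 2 ≤ 2 * K * C) (s : ℝ) :
    s * a + -s * b ≤ C + K * s ^ 2 / 2 := by
  refine (le_abs_self _).trans (abs_le_of_sq_le_sq ?_ (by positivity))
  calc (s * a + -s * b) ^ 2 = s ^ 2 * (a - b) ^ 2 := by ring
    _ ≤ s ^ 2 * (2 * K * C) := by gcongr
    _ ≤ (C + K * s ^ 2 / 2) ^ 2 := by linarith [sq_nonneg (C - K * s ^ 2 / 2)]

namespace HasPropertyTau

lemma lintegral_exp_mul_lintegral_exp_neg_le (hμ : HasPropertyTau μ c) (hF : Measurable F)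
    (hc : ∀ x y, 0 ≤ c x y) (hFc : ∀ x y, (F x - F y) ^ 2 ≤ 2 * K * c x y) (s : ℝ) :
    (∫⁻ x, ENNReal.ofReal (Real.exp (s * F x)) ∂μ) *
      ∫⁻ x, ENNReal.ofReal (Real.exp (-s * F x)) ∂μ ≤
      ENNReal.ofReal (Real.exp (K * s ^ 2 / 2)) := by
  set e := ENNReal.ofReal (Real.exp (K * s ^ 2 / 2))
  have he₀ : e ≠ 0 := (ENNReal.ofReal_pos.2 (Real.exp_pos _)).ne'
  have he_top : e ≠ ∞ := ENNReal.ofReal_ne_top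
  have hτ := hμ (u := fun x => ENNReal.ofReal (Real.exp (s * F x)))
    (w := fun y => e⁻¹ * ENNReal.ofReal (Real.exp (-s * F y))) (by fun_prop) (by fun_prop)
    fun x y => by
      rw [mul_left_comm, mul_comm, ← div_eq_mul_inv, ENNReal.div_le_iff he₀ he_top,
        ← ENNReal.ofReal_mul (Real.exp_nonneg _), ← ENNReal.ofReal_mul (Real.exp_nonneg _),
        ← Real.exp_add, ← Real.exp_add]
      exact ENNReal.ofReal_le_ofReal
        (Real.exp_le_exp.2 (mul_sub_le_add_of_sq_sub_le (hc x y) (hFc x y) s))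
  rwa [lintegral_const_mul _ (by fun_prop), mul_left_comm, mul_comm, ← div_eq_mul_inv,
    ENNReal.div_le_iff he₀ he_top, one_mul] at hτ

lemma integrable_exp_mul [NeZero μ] (hμ : HasPropertyTau μ c) (hF : Measurable F)
    (hc : ∀ x y, 0 ≤ c x y) (hFc : ∀ x y, (F x - F y) ^ 2 ≤ 2 * K * c x y) (s : ℝ) :
    Integrable (fun x => Real.exp (s * F x)) μ := by
  have hpos : ∫⁻ x, ENNReal.ofReal (Real.exp (-s * F x)) ∂μ ≠ 0 := by
    rw [Ne, lintegral_eq_zero_iff (by fun_prop)]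
    intro hzero
    obtain ⟨x, hx⟩ := hzero.exists
    exact (ENNReal.ofReal_pos.2 (Real.exp_pos (-s * F x))).ne' hx
  refine ⟨by fun_prop, ?_⟩
  rw [hasFiniteIntegral_iff_ofReal (ae_of_all _ fun x => Real.exp_nonneg _)]
  exact ENNReal.lt_top_of_mul_ne_top_left (ne_top_of_le_ne_top ENNReal.ofReal_ne_top
    (hμ.lintegral_exp_mul_lintegral_exp_neg_le hF hc hFc s)) hpos

lemma mgf_mul_mgf_neg_le [NeZero μ] (hμ : HasPropertyTau μ c) (hF : Measurable F)
    (hc : ∀ x y, 0 ≤ c x y) (hFc : ∀ x y, (F x - F y) ^ 2 ≤ 2 * K * c x y) (s : ℝ) :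
    mgf F μ s * mgf F μ (-s) ≤ Real.exp (K * s ^ 2 / 2) := by
  have hτ := hμ.lintegral_exp_mul_lintegral_exp_neg_le hF hc hFc s
  rw [← ofReal_integral_eq_lintegral_ofReal (hμ.integrable_exp_mul hF hc hFc s)
      (ae_of_all _ fun x => Real.exp_nonneg _),
    ← ofReal_integral_eq_lintegral_ofReal (hμ.integrable_exp_mul hF hc hFc (-s))
      (ae_of_all _ fun x => Real.exp_nonneg _),
    ← ENNReal.ofReal_mul (integral_nonneg fun x => Real.exp_nonneg _)] at hτ
  exact (ENNReal.ofReal_le_ofReal_iff (Real.exp_nonneg _)).1 hτ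

theorem hasSubgaussianMGF [IsProbabilityMeasure μ] (hμ : HasPropertyTau μ c) (hF : Measurable F)
    (hc : ∀ x y, 0 ≤ c x y) (hFc : ∀ x y, (F x - F y) ^ 2 ≤ 2 * K * c x y) :
    HasSubgaussianMGF (fun x => F x - μ[F]) K μ := by
  have hexp := hμ.integrable_exp_mul hF hc hFc
  have hint : Integrable F μ := by
    simpa using integrable_pow_of_integrable_exp_mul one_ne_zero (hexp 1) (hexp (-1)) 1
  have hcenter (s : ℝ) : (fun x => Real.exp (s * (F x - μ[F]))) =
      fun x => Real.exp (s * F x) * Real.exp (-s * μ[F]) := by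
    funext x
    rw [← Real.exp_add]
    ring_nf
  refine ⟨fun s => hcenter s ▸ (hexp s).mul_const _, fun s => ?_⟩
  calc mgf (fun x => F x - μ[F]) μ s = mgf F μ s * Real.exp (-s * μ[F]) := by
        rw [mgf, hcenter, integral_mul_const, mgf]
    _ ≤ mgf F μ s * mgf F μ (-s) :=
        mul_le_mul_of_nonneg_left (exp_mul_integral_le_mgf (-s) hint (hexp (-s))) mgf_nonneg
    _ ≤ Real.exp (K * s ^ 2 / 2) := hμ.mgf_mul_mgf_neg_le hF hc hFc s

end HasPropertyTau

end Concentration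

/-! ### Linear and quadratic functions of Gaussian vectors -/

lemma hasDerivAt_eval_mul_exp (v : ℝ) (p : Polynomial ℝ) (t : ℝ) :
    HasDerivAt (fun t => p.eval t * Real.exp (v * t ^ 2 / 2))
      ((Polynomial.derivative p + Polynomial.C v * Polynomial.X * p).eval t *
        Real.exp (v * t ^ 2 / 2)) t := by
  have hexp : HasDerivAt (fun t : ℝ => v * t ^ 2 / 2) (v * t) t := by
    convert! ((hasDerivAt_pow 2 t).const_mul v).div_const 2 using 1
    simp
    ring
  convert! (p.hasDerivAt t).mul hexp.exp using 1
  simp only [Polynomial.eval_add, Polynomial.eval_mul, Polynomial.eval_C, Polynomial.eval_X]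
  ring

lemma integral_pow_four_gaussianReal (v : ℝ≥0) :
    ∫ x, x ^ 4 ∂gaussianReal 0 v = 3 * (v : ℝ) ^ 2 := by
  have hmgf : mgf id (gaussianReal 0 v) =
      fun t => (1 : Polynomial ℝ).eval t * Real.exp (v * t ^ 2 / 2) := by
    simp [mgf_id_gaussianReal]
  have hderiv (p : Polynomial ℝ) := funext fun t => (hasDerivAt_eval_mul_exp v p t).deriv
  have hmoment : ∫ x, x ^ 4 ∂gaussianReal 0 v = iteratedDeriv 4 (mgf id (gaussianReal 0 v)) 0 :=
    (iteratedDeriv_mgf_zero (by simp) 4).symm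
  rw [hmoment, hmgf]
  simp only [iteratedDeriv_succ, iteratedDeriv_zero, hderiv]
  simp
  ring

section DotProduct

variable {ι : Type*} [Fintype ι] (v : ℝ≥0) (φ ψ : ι → ℝ)

lemma variance_dotProduct_pi_gaussianReal :
    Var[fun r => φ ⬝ᵥ r; Measure.pi fun _ : ι => gaussianReal 0 v] = v * (φ ⬝ᵥ φ) := by
  have hsum : (fun r => φ ⬝ᵥ r) = ∑ i, fun r : ι → ℝ => φ i * r i := by
    ext r
    simp [dotProduct]
  rw [hsum, variance_sum_pi (X := fun i x => φ i * x)
    fun i => (memLp_id_gaussianReal' 2 (by simp)).const_mul (φ i)]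
  simp only [dotProduct, Finset.mul_sum]
  refine Finset.sum_congr rfl fun i _ => ?_
  rw [variance_const_mul, variance_fun_id_gaussianReal]
  ring

lemma hasLaw_dotProduct_pi_gaussianReal :
    HasLaw (fun r => φ ⬝ᵥ r) (gaussianReal 0 (v * (φ ⬝ᵥ φ).toNNReal))
      (Measure.pi fun _ : ι => gaussianReal 0 v) := by
  have hcoord (i : ι) :=
    gaussianReal_const_mul (measurePreserving_eval (fun _ : ι => gaussianReal 0 v) i).hasLaw (φ i)
  have hgauss : HasGaussianLaw (fun r => φ ⬝ᵥ r) (Measure.pi fun _ : ι => gaussianReal 0 v) :=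
    (iIndepFun_pi (X := fun i x => φ i * x) (by fun_prop)).hasGaussianLaw_fun_sum
      fun i => (hcoord i).hasGaussianLaw
  have hmean : ∫ r, φ ⬝ᵥ r ∂Measure.pi (fun _ : ι => gaussianReal 0 v) = 0 := by
    simp only [dotProduct]
    rw [integral_finsetSum _ fun i _ => (hcoord i).hasGaussianLaw.integrable]
    refine Finset.sum_eq_zero fun i _ => (hcoord i).integral_eq.trans ?_
    rw [integral_id_gaussianReal, mul_zero]
  refine ⟨by fun_prop, ?_⟩
  rw [hgauss.map_eq_gaussianReal, hmean, variance_dotProduct_pi_gaussianReal,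
    Real.toNNReal_mul v.coe_nonneg, Real.toNNReal_coe]

lemma memLp_dotProduct_pi_gaussianReal {p : ℝ≥0∞} (hp : p ≠ ∞) :
    MemLp (fun r => φ ⬝ᵥ r) p (Measure.pi fun _ : ι => gaussianReal 0 v) :=
  (hasLaw_dotProduct_pi_gaussianReal v φ).hasGaussianLaw.memLp hp

lemma integral_dotProduct_sq_pi_gaussianReal :
    ∫ r, (φ ⬝ᵥ r) ^ 2 ∂(Measure.pi fun _ : ι => gaussianReal 0 v) = v * (φ ⬝ᵥ φ) := by
  have hmean := (hasLaw_dotProduct_pi_gaussianReal v φ).integral_eq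
  rw [integral_id_gaussianReal] at hmean
  rw [← variance_dotProduct_pi_gaussianReal, variance_of_integral_eq_zero (by fun_prop) hmean]

lemma integral_dotProduct_pow_four_pi_gaussianReal :
    ∫ r, (φ ⬝ᵥ r) ^ 4 ∂(Measure.pi fun _ : ι => gaussianReal 0 v) = 3 * (v * (φ ⬝ᵥ φ)) ^ 2 := by
  have hlaw := (hasLaw_dotProduct_pi_gaussianReal v φ).integral_comp
    (f := fun x => x ^ 4) (by fun_prop)
  refine hlaw.trans ?_
  have hφ : 0 ≤ φ ⬝ᵥ φ := Finset.sum_nonneg fun i _ => mul_self_nonneg (φ i)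
  rw [integral_pow_four_gaussianReal, NNReal.coe_mul, Real.coe_toNNReal _ hφ]

lemma memLp_dotProduct_mul_dotProduct_pi_gaussianReal :
    MemLp (fun r => (φ ⬝ᵥ r) * (ψ ⬝ᵥ r)) 2 (Measure.pi fun _ : ι => gaussianReal 0 v) := by
  have : ENNReal.HolderTriple 4 4 2 :=
    ⟨by rw [← two_mul, show (4 : ℝ≥0∞) = 2 * 2 by norm_num, ENNReal.mul_inv (by simp) (by simp),
      ← mul_assoc, ENNReal.mul_inv_cancel (by simp) (by simp), one_mul]⟩
  exact (memLp_dotProduct_pi_gaussianReal v ψ (p := 4) (by simp)).mul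
    (memLp_dotProduct_pi_gaussianReal v φ (p := 4) (by simp))

lemma integral_dotProduct_mul_dotProduct_pi_gaussianReal :
    ∫ r, (φ ⬝ᵥ r) * (ψ ⬝ᵥ r) ∂(Measure.pi fun _ : ι => gaussianReal 0 v) = v * (φ ⬝ᵥ ψ) := by
  have hpolar (r : ι → ℝ) :
      (φ ⬝ᵥ r) * (ψ ⬝ᵥ r) = (((φ + ψ) ⬝ᵥ r) ^ 2 - ((φ - ψ) ⬝ᵥ r) ^ 2) / 4 := by
    rw [add_dotProduct, sub_dotProduct]
    ring
  have hint (χ : ι → ℝ) := (memLp_dotProduct_pi_gaussianReal v χ (p := 2) (by simp)).integrable_sq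
  simp only [hpolar]
  rw [integral_div, integral_sub (hint _) (hint _), integral_dotProduct_sq_pi_gaussianReal,
    integral_dotProduct_sq_pi_gaussianReal]
  simp only [add_dotProduct, sub_dotProduct, dotProduct_add, dotProduct_sub, dotProduct_comm ψ φ]
  ring

lemma variance_dotProduct_mul_dotProduct_pi_gaussianReal_le :
    Var[fun r => (φ ⬝ᵥ r) * (ψ ⬝ᵥ r); Measure.pi fun _ : ι => gaussianReal 0 v] ≤
      3 * (v : ℝ) ^ 2 * (((φ ⬝ᵥ φ) ^ 2 + (ψ ⬝ᵥ ψ) ^ 2) / 2) := by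
  set μ := Measure.pi fun _ : ι => gaussianReal 0 v
  have hint (χ : ι → ℝ) : Integrable (fun r => (χ ⬝ᵥ r) ^ 4) μ :=
    (memLp_dotProduct_mul_dotProduct_pi_gaussianReal v χ χ).integrable_sq.congr
      (ae_of_all _ fun r => by ring)
  have hprod := memLp_dotProduct_mul_dotProduct_pi_gaussianReal v φ ψ
  calc Var[fun r => (φ ⬝ᵥ r) * (ψ ⬝ᵥ r); μ] ≤ ∫ r, ((φ ⬝ᵥ r) * (ψ ⬝ᵥ r)) ^ 2 ∂μ :=
        variance_le_expectation_sq (by fun_prop)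
    _ ≤ ∫ r, ((φ ⬝ᵥ r) ^ 4 + (ψ ⬝ᵥ r) ^ 4) / 2 ∂μ :=
        integral_mono hprod.integrable_sq (((hint φ).add (hint ψ)).div_const 2) fun r => by
          dsimp only
          linarith [sq_nonneg ((φ ⬝ᵥ r) ^ 2 - (ψ ⬝ᵥ r) ^ 2)]
    _ = 3 * (v : ℝ) ^ 2 * (((φ ⬝ᵥ φ) ^ 2 + (ψ ⬝ᵥ ψ) ^ 2) / 2) := by
        rw [integral_div, integral_add (hint φ) (hint ψ),
          integral_dotProduct_pow_four_pi_gaussianReal,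
          integral_dotProduct_pow_four_pi_gaussianReal]
        ring

end DotProduct

section Transpose

variable {ι κ α : Type*} [Fintype ι] [Fintype κ] [MeasurableSpace α] (μ : ι → κ → Measure α)
  [∀ i j, IsProbabilityMeasure (μ i j)]

lemma measurePreserving_swap_pi_pi :
    MeasurePreserving (fun (R : ι → κ → α) j i => R i j)
      (Measure.pi fun i => Measure.pi fun j => μ i j)
      (Measure.pi fun j => Measure.pi fun i => μ i j) := by
  have hswap : Measurable fun (R : ι → κ → α) j i => R i j := by fun_prop
  refine ⟨hswap, Eq.symm ?_⟩
  refine Measure.pi_eq_generateFrom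
    (C := fun _ => Set.pi Set.univ '' Set.pi Set.univ fun _ : ι => {s : Set α | MeasurableSet s})
    (fun _ => generateFrom_pi) (fun _ => isPiSystem_pi)
    (fun _ => ⟨fun _ => Set.univ, fun _ => ⟨fun _ => Set.univ, by simp, by simp⟩, by simp,
      Set.iUnion_const _⟩) fun s hs => ?_
  choose t ht hts using hs
  have hpreimage : (fun (R : ι → κ → α) j i => R i j) ⁻¹' Set.univ.pi s =
      Set.univ.pi fun i => Set.univ.pi fun j => t j i := by
    ext R
    simp only [Set.mem_preimage, Set.mem_pi, Set.mem_univ, true_imp_iff, ← hts]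
    exact forall_comm
  have hs_meas (j : κ) : MeasurableSet (s j) :=
    hts j ▸ MeasurableSet.univ_pi fun i => ht j i (Set.mem_univ i)
  rw [Measure.map_apply hswap (MeasurableSet.univ_pi hs_meas), hpreimage]
  simp only [← hts, Measure.pi_pi]
  exact Finset.prod_comm

lemma measurePreserving_col_pi_pi (j : κ) :
    MeasurePreserving (fun (R : ι → κ → α) i => R i j)
      (Measure.pi fun i => Measure.pi fun j => μ i j) (Measure.pi fun i => μ i j) :=
  (measurePreserving_eval (fun j => Measure.pi fun i => μ i j) j).comp
    (measurePreserving_swap_pi_pi μ)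

lemma iIndepFun_col_pi_pi :
    iIndepFun (fun j (R : ι → κ → α) i => R i j)
      (Measure.pi fun i => Measure.pi fun j => μ i j) := by
  rw [iIndepFun_iff_map_fun_eq_pi_map fun j => (measurePreserving_col_pi_pi μ j).aemeasurable,
    (measurePreserving_swap_pi_pi μ).map_eq]
  simp only [(measurePreserving_col_pi_pi μ _).map_eq]

end Transpose

/-! ### The Frobenius norm -/

section Frobenius

variable {m n p : ℕ}

open scoped Matrix.Norms.Frobenius in
lemma frob_eq_norm (M : Matrix (Fin m) (Fin n) ℝ) : frob M = ‖M‖ := by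
  simp [frob, frobenius_norm_def, Real.sqrt_eq_rpow]

lemma frob_nonneg (M : Matrix (Fin m) (Fin n) ℝ) : 0 ≤ frob M := Real.sqrt_nonneg _

open scoped Matrix.Norms.Frobenius in
lemma frob_sub_comm (M N : Matrix (Fin m) (Fin n) ℝ) : frob (M - N) = frob (N - M) := by
  rw [frob_eq_norm, frob_eq_norm, norm_sub_rev]

open scoped Matrix.Norms.Frobenius in
lemma frob_sub_frob_le (M N : Matrix (Fin m) (Fin n) ℝ) : frob M - frob N ≤ frob (M - N) := by
  simpa only [frob_eq_norm] using norm_sub_norm_le M N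

lemma continuous_frob : Continuous (frob : Matrix (Fin m) (Fin n) ℝ → ℝ) := by
  unfold frob
  fun_prop

lemma frob_sq_eq_sum (M : Matrix (Fin m) (Fin n) ℝ) : frob M ^ 2 = ∑ i, ∑ j, M i j ^ 2 :=
  Real.sq_sqrt (by positivity)

lemma frob_sq_eq_trace (M : Matrix (Fin m) (Fin n) ℝ) : frob M ^ 2 = (Mᵀ * M).trace := by
  rw [frob_sq_eq_sum, Finset.sum_comm]
  simp only [Matrix.trace, Matrix.diag, Matrix.mul_apply, Matrix.transpose_apply, pow_two]

lemma abs_trace_transpose_mul_le (M N : Matrix (Fin m) (Fin n) ℝ) :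
    |(Mᵀ * N).trace| ≤ frob M * frob N := by
  have htrace : (Mᵀ * N).trace = ∑ x : Fin m × Fin n, M x.1 x.2 * N x.1 x.2 := by
    simp only [Matrix.trace, Matrix.diag, Matrix.mul_apply, Matrix.transpose_apply]
    rw [Finset.sum_comm, Fintype.sum_prod_type]
  rw [htrace, ← Real.sqrt_sq_eq_abs, frob, frob, ← Fintype.sum_prod_type',
    ← Fintype.sum_prod_type', ← Real.sqrt_mul (by positivity)]
  exact Real.sqrt_le_sqrt (Finset.sum_mul_sq_le_sq_mul_sq _ _ _)

lemma frob_sub_mul_sq {X : Matrix (Fin n) (Fin m) ℝ} (hX : Xᵀ * X = 1)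
    (M : Matrix (Fin n) (Fin p) ℝ) :
    frob (M - X * Xᵀ * M) ^ 2 = frob M ^ 2 - frob (Xᵀ * M) ^ 2 := by
  have hproj : Xᵀ * (X * (Xᵀ * M)) = Xᵀ * M := by rw [← Matrix.mul_assoc, hX, Matrix.one_mul]
  simp only [frob_sq_eq_trace, ← Matrix.trace_sub, Matrix.transpose_sub, Matrix.transpose_mul,
    Matrix.transpose_transpose, Matrix.sub_mul, Matrix.mul_sub, Matrix.mul_assoc, hproj]
  rw [sub_self, sub_zero]

lemma frob_transpose_mul_le {X : Matrix (Fin n) (Fin m) ℝ} (hX : Xᵀ * X = 1)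
    (M : Matrix (Fin n) (Fin p) ℝ) : frob (Xᵀ * M) ≤ frob M :=
  le_of_sq_le_sq (by linarith [frob_sub_mul_sq hX M, sq_nonneg (frob (M - X * Xᵀ * M))])
    (frob_nonneg M)

lemma frob_sub_mul_le {X : Matrix (Fin n) (Fin m) ℝ} (hX : Xᵀ * X = 1)
    (M : Matrix (Fin n) (Fin p) ℝ) : frob (M - X * Xᵀ * M) ≤ frob M :=
  le_of_sq_le_sq (by linarith [frob_sub_mul_sq hX M, sq_nonneg (frob (Xᵀ * M))]) (frob_nonneg M)

lemma frob_mul_left {X : Matrix (Fin n) (Fin m) ℝ} (hX : Xᵀ * X = 1)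
    (M : Matrix (Fin m) (Fin p) ℝ) : frob (X * M) = frob M := by
  rw [← sq_eq_sq₀ (frob_nonneg _) (frob_nonneg _), frob_sq_eq_trace, frob_sq_eq_trace,
    Matrix.transpose_mul, Matrix.mul_assoc, ← Matrix.mul_assoc Xᵀ, hX, Matrix.one_mul]

lemma frob_mul_right {X : Matrix (Fin n) (Fin m) ℝ} (hX : Xᵀ * X = 1)
    (M : Matrix (Fin p) (Fin m) ℝ) : frob (M * Xᵀ) = frob M := by
  rw [← sq_eq_sq₀ (frob_nonneg _) (frob_nonneg _), frob_sq_eq_trace, frob_sq_eq_trace,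
    Matrix.trace_mul_comm, Matrix.transpose_mul, Matrix.transpose_transpose, Matrix.mul_assoc,
    ← Matrix.mul_assoc Xᵀ, hX, Matrix.one_mul, Matrix.trace_mul_comm]

end Frobenius

/-! ### The k-means cost of a random projection -/

section Cost

variable {n k d : ℕ} {Φ X : Matrix (Fin n) (Fin k) ℝ}

lemma transpose_mul_self_mul_rectId {U : Matrix (Fin n) (Fin n) ℝ} (hU : Uᵀ * U = 1)
    (hkn : k ≤ n) : (U * rectId n k)ᵀ * (U * rectId n k) = 1 := by
  rw [Matrix.transpose_mul, Matrix.mul_assoc, ← Matrix.mul_assoc Uᵀ, hU, Matrix.one_mul]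
  ext a b
  simp only [Matrix.mul_apply, Matrix.transpose_apply, rectId, Matrix.of_apply]
  rw [Finset.sum_eq_single (Fin.castLE hkn a)
    (fun i _ hi => by rw [if_neg (show ¬(i : ℕ) = a from fun h => hi (Fin.ext h)), zero_mul])
    (by simp)]
  simp [Matrix.one_apply, Fin.ext_iff]

lemma IsIndicator.transpose_mul_self (hX : IsIndicator X) : Xᵀ * X = 1 := by
  obtain ⟨f, hf, hX⟩ := hX
  ext j j'
  simp only [Matrix.mul_apply, Matrix.transpose_apply, hX]
  rcases eq_or_ne j j' with rfl | hne
  · have hcard : (0 : ℝ) < #{i | f i = j} := by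
      obtain ⟨i, hi⟩ := hf j
      exact_mod_cast Finset.card_pos.2 ⟨i, by simp [hi]⟩
    simp only [ite_mul_ite, mul_zero, div_mul_div_comm, one_mul, Real.mul_self_sqrt hcard.le]
    rw [← Finset.sum_filter, Finset.sum_const, nsmul_eq_mul, mul_one_div_cancel hcard.ne',
      Matrix.one_apply_eq]
  · rw [Matrix.one_apply_ne hne]
    refine Finset.sum_eq_zero fun i _ => ?_
    split_ifs with hj hj'
    · exact absurd (hj.symm.trans hj') hne
    all_goals simp

lemma IsIndicator.eq_of_le_one (hk : k ≤ 1) {Y : Matrix (Fin n) (Fin k) ℝ} (hX : IsIndicator X)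
    (hY : IsIndicator Y) : X = Y := by
  obtain ⟨f, -, hX⟩ := hX
  obtain ⟨g, -, hY⟩ := hY
  have : Subsingleton (Fin k) := Fin.subsingleton_iff_le_one.2 hk
  ext i j
  rw [hX, hY, Subsingleton.elim f g]

lemma finite_setOf_isIndicator : {X : Matrix (Fin n) (Fin k) ℝ | IsIndicator X}.Finite := by
  refine (Set.finite_range fun f : Fin n → Fin k => (Matrix.of fun i j =>
    if f i = j then 1 / √(#{i' | f i' = j} : ℝ) else 0 : Matrix (Fin n) (Fin k) ℝ)).subset ?_
  rintro X ⟨f, -, hX⟩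
  exact ⟨f, Matrix.ext fun i j => (hX i j).symm⟩

lemma kmeansCost_mul_transpose_mul (R : Matrix (Fin n) (Fin d) ℝ) :
    kmeansCost (Φ * Φᵀ * R) X = frob ((Φ - X * Xᵀ * Φ) * Φᵀ * R) := by
  rw [kmeansCost]
  simp only [Matrix.sub_mul, Matrix.mul_assoc]

lemma kmeansCost_sub_kmeansCost_le_frob (hΦ : Φᵀ * Φ = 1) (hX : Xᵀ * X = 1)
    (R S : Matrix (Fin n) (Fin d) ℝ) :
    kmeansCost (Φ * Φᵀ * R) X - kmeansCost (Φ * Φᵀ * S) X ≤ frob (R - S) := by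
  set D := Φ * (Φᵀ * (R - S)) with hD
  have hdiff : Φ * Φᵀ * R - X * Xᵀ * (Φ * Φᵀ * R) - (Φ * Φᵀ * S - X * Xᵀ * (Φ * Φᵀ * S)) =
      D - X * Xᵀ * D := by
    simp only [hD, Matrix.mul_sub, Matrix.mul_assoc]
    abel
  calc kmeansCost (Φ * Φᵀ * R) X - kmeansCost (Φ * Φᵀ * S) X ≤ frob (D - X * Xᵀ * D) :=
        hdiff ▸ frob_sub_frob_le _ _
    _ ≤ frob D := frob_sub_mul_le hX D
    _ = frob (Φᵀ * (R - S)) := frob_mul_left hΦ _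
    _ ≤ frob (R - S) := frob_transpose_mul_le hΦ _

/-- The error of `(ΦᵀR)(ΦᵀR)ᵀ` as an estimate of the Gram matrix `ΦᵀΦ = 1`. It controls the effect
of the random projection on all k-means costs at once. -/
def gramError (Φ : Matrix (Fin n) (Fin k) ℝ) (R : Matrix (Fin n) (Fin d) ℝ) :
    Matrix (Fin k) (Fin k) ℝ :=
  Φᵀ * R * (Φᵀ * R)ᵀ - 1

lemma frob_mul_sq_sub_frob_sq (A : Matrix (Fin n) (Fin k) ℝ) (R : Matrix (Fin n) (Fin d) ℝ) :
    frob (A * Φᵀ * R) ^ 2 - frob A ^ 2 = ((Aᵀ * A)ᵀ * gramError Φ R).trace := by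
  rw [Matrix.mul_assoc, frob_sq_eq_trace, frob_sq_eq_trace, gramError, Matrix.mul_sub,
    Matrix.mul_one, Matrix.trace_sub, Matrix.trace_transpose, Matrix.transpose_mul A,
    Matrix.transpose_mul Aᵀ, Matrix.transpose_transpose, Matrix.mul_assoc (Φᵀ * R)ᵀ,
    Matrix.trace_mul_comm (Φᵀ * R)ᵀ]
  simp only [Matrix.mul_assoc]

lemma frob_transpose_mul_self_le_kmeansCost (hΦ : Φᵀ * Φ = 1) (hX : Xᵀ * X = 1) :
    frob ((Φ - X * Xᵀ * Φ)ᵀ * (Φ - X * Xᵀ * Φ)) ≤ kmeansCost Φ X := by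
  have hproj : Xᵀ * (X * (Xᵀ * Φ)) = Xᵀ * Φ := by rw [← Matrix.mul_assoc, hX, Matrix.one_mul]
  have hgram : (Φ - X * Xᵀ * Φ)ᵀ * (Φ - X * Xᵀ * Φ) = Φᵀ * (Φ - X * Xᵀ * Φ) := by
    simp only [Matrix.transpose_sub, Matrix.transpose_mul, Matrix.transpose_transpose,
      Matrix.sub_mul, Matrix.mul_sub, Matrix.mul_assoc, hproj]
    rw [sub_self, sub_zero]
  rw [hgram]
  exact frob_transpose_mul_le hΦ _

lemma kmeansCost_sub_kmeansCost_le_frob_gramError (hΦ : Φᵀ * Φ = 1) (hX : Xᵀ * X = 1)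
    (R : Matrix (Fin n) (Fin d) ℝ) :
    kmeansCost Φ X - kmeansCost (Φ * Φᵀ * R) X ≤ frob (gramError Φ R) := by
  set a := kmeansCost Φ X
  set b := kmeansCost (Φ * Φᵀ * R) X with hb
  set e := frob (gramError Φ R)
  have hb0 : 0 ≤ b := frob_nonneg _
  have he0 : 0 ≤ e := frob_nonneg _
  have hsq : a ^ 2 - b ^ 2 ≤ a * e :=
    calc a ^ 2 - b ^ 2 ≤ |b ^ 2 - a ^ 2| := by rw [abs_sub_comm]; exact le_abs_self _
      _ ≤ frob ((Φ - X * Xᵀ * Φ)ᵀ * (Φ - X * Xᵀ * Φ)) * e := by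
        rw [hb, kmeansCost_mul_transpose_mul]
        exact (congrArg abs (frob_mul_sq_sub_frob_sq _ R)).trans_le
          (abs_trace_transpose_mul_le _ _)
      _ ≤ a * e := by gcongr; exact frob_transpose_mul_self_le_kmeansCost hΦ hX
  by_contra! hlt
  nlinarith

end Cost

/-! ### Moments of Gaussian random projections -/

lemma integral_le_of_integral_sq_le {Ω : Type*} [MeasurableSpace Ω] {μ : Measure Ω}
    [IsProbabilityMeasure μ] {f : Ω → ℝ} (hf : MemLp f 2 μ) {c : ℝ} (hc : 0 ≤ c)
    (hsq : ∫ x, f x ^ 2 ∂μ ≤ c ^ 2) : ∫ x, f x ∂μ ≤ c := by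
  have hvar := variance_nonneg f μ
  rw [variance_eq_sub hf] at hvar
  exact le_of_sq_le_sq ((sub_nonneg.1 hvar).trans hsq) hc

instance isProbabilityMeasure_gaussMeasure (n d : ℕ) : IsProbabilityMeasure (gaussMeasure n d) := by
  unfold gaussMeasure
  infer_instance

lemma hasPropertyTau_gaussMeasure (n d : ℕ) :
    HasPropertyTau (gaussMeasure n d)
      fun R S => (d : ℝ) / 4 * frob (Matrix.of R - Matrix.of S) ^ 2 := by
  have hentry := hasPropertyTau_gaussianReal 0 (d : ℝ≥0)⁻¹
  convert! HasPropertyTau.pi fun _ : Fin n => HasPropertyTau.pi fun _ : Fin d => hentry using 3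
    with R S
  simp only [frob_sq_eq_sum, Finset.mul_sum, NNReal.coe_inv, NNReal.coe_natCast, Matrix.sub_apply,
    Matrix.of_apply]
  refine Finset.sum_congr rfl fun i _ => Finset.sum_congr rfl fun j _ => ?_
  rw [div_mul_eq_mul_div, div_mul_eq_div_div, div_inv_eq_mul]
  ring

section GaussMeasure

variable {n d : ℕ} (φ ψ : Fin n → ℝ)

lemma measurePreserving_col_gaussMeasure (l : Fin d) :
    MeasurePreserving (fun R i => R i l) (gaussMeasure n d)
      (Measure.pi fun _ => gaussianReal 0 (d : ℝ≥0)⁻¹) :=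
  measurePreserving_col_pi_pi (fun _ _ => gaussianReal 0 (d : ℝ≥0)⁻¹) l

lemma vecMul_dotProduct_vecMul_of (R : Fin n → Fin d → ℝ) :
    (φ ᵥ* Matrix.of R) ⬝ᵥ (ψ ᵥ* Matrix.of R) =
      ∑ l, (φ ⬝ᵥ fun i => R i l) * (ψ ⬝ᵥ fun i => R i l) :=
  rfl

lemma memLp_dotProduct_col_mul_dotProduct_col_gaussMeasure (l : Fin d) :
    MemLp (fun R => (φ ⬝ᵥ fun i => R i l) * (ψ ⬝ᵥ fun i => R i l)) 2 (gaussMeasure n d) :=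
  (memLp_dotProduct_mul_dotProduct_pi_gaussianReal _ φ ψ).comp_measurePreserving
    (measurePreserving_col_gaussMeasure l)

lemma memLp_vecMul_dotProduct_vecMul_gaussMeasure :
    MemLp (fun R => (φ ᵥ* Matrix.of R) ⬝ᵥ (ψ ᵥ* Matrix.of R)) 2 (gaussMeasure n d) :=
  memLp_finsetSum _ fun l _ => memLp_dotProduct_col_mul_dotProduct_col_gaussMeasure φ ψ l

lemma integral_vecMul_dotProduct_vecMul_gaussMeasure (hd : d ≠ 0) :
    ∫ R, (φ ᵥ* Matrix.of R) ⬝ᵥ (ψ ᵥ* Matrix.of R) ∂gaussMeasure n d = φ ⬝ᵥ ψ := by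
  have hcol (l : Fin d) :
      ∫ R, (φ ⬝ᵥ fun i => R i l) * (ψ ⬝ᵥ fun i => R i l) ∂gaussMeasure n d =
        (d : ℝ)⁻¹ * (φ ⬝ᵥ ψ) := by
    refine ((measurePreserving_col_gaussMeasure l).hasLaw.integral_comp
      (f := fun r => (φ ⬝ᵥ r) * (ψ ⬝ᵥ r)) (by fun_prop)).trans ?_
    rw [integral_dotProduct_mul_dotProduct_pi_gaussianReal, NNReal.coe_inv, NNReal.coe_natCast]
  simp only [vecMul_dotProduct_vecMul_of]
  rw [integral_finsetSum _ fun l _ =>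
    (memLp_dotProduct_col_mul_dotProduct_col_gaussMeasure φ ψ l).integrable one_le_two]
  simp only [hcol, Finset.sum_const, Finset.card_univ, Fintype.card_fin, nsmul_eq_mul]
  field_simp

lemma variance_vecMul_dotProduct_vecMul_gaussMeasure_le :
    Var[fun R => (φ ᵥ* Matrix.of R) ⬝ᵥ (ψ ᵥ* Matrix.of R); gaussMeasure n d] ≤
      3 * (((φ ⬝ᵥ φ) ^ 2 + (ψ ⬝ᵥ ψ) ^ 2) / 2) / d := by
  let g (r : Fin n → ℝ) : ℝ := (φ ⬝ᵥ r) * (ψ ⬝ᵥ r)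
  have hsum : (fun R => (φ ᵥ* Matrix.of R) ⬝ᵥ (ψ ᵥ* Matrix.of R)) =
      ∑ l, fun R : Fin n → Fin d → ℝ => g fun i => R i l := by
    ext R
    rw [Finset.sum_apply, vecMul_dotProduct_vecMul_of]
  have hindep : iIndepFun (fun l (R : Fin n → Fin d → ℝ) => g fun i => R i l)
      (gaussMeasure n d) :=
    (iIndepFun_col_pi_pi fun _ _ => gaussianReal 0 (d : ℝ≥0)⁻¹).comp (fun _ => g)
      fun _ => by fun_prop
  have hcol (l : Fin d) : Var[fun R : Fin n → Fin d → ℝ => g fun i => R i l; gaussMeasure n d] ≤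
      3 * ((d : ℝ)⁻¹) ^ 2 * (((φ ⬝ᵥ φ) ^ 2 + (ψ ⬝ᵥ ψ) ^ 2) / 2) := by
    refine ((measurePreserving_col_gaussMeasure l).variance_fun_comp
      (f := g) (by fun_prop)).trans_le ?_
    exact_mod_cast variance_dotProduct_mul_dotProduct_pi_gaussianReal_le (d : ℝ≥0)⁻¹ φ ψ
  rw [hsum, IndepFun.variance_sum
    (fun l _ => memLp_dotProduct_col_mul_dotProduct_col_gaussMeasure φ ψ l)
    fun l _ l' _ hne => hindep.indepFun hne]
  refine (Finset.sum_le_sum fun l _ => hcol l).trans_eq ?_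
  rw [Finset.sum_const, Finset.card_univ, Fintype.card_fin, nsmul_eq_mul]
  rcases eq_or_ne d 0 with rfl | hd
  · simp
  · field_simp

lemma frob_mul_sq_eq_sum_vecMul_dotProduct_vecMul {m : ℕ} (A : Matrix (Fin m) (Fin n) ℝ)
    (R : Matrix (Fin n) (Fin d) ℝ) : frob (A * R) ^ 2 = ∑ i, (A i ᵥ* R) ⬝ᵥ (A i ᵥ* R) := by
  simp only [frob_sq_eq_sum, dotProduct, ← pow_two, ← Matrix.mul_apply_eq_vecMul]

lemma continuous_frob_mul_of {m : ℕ} (A : Matrix (Fin m) (Fin n) ℝ) :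
    Continuous fun R : Fin n → Fin d → ℝ => frob (A * Matrix.of R) :=
  continuous_frob.comp (continuous_const.matrix_mul continuous_id)

lemma memLp_frob_mul_gaussMeasure {m : ℕ} (A : Matrix (Fin m) (Fin n) ℝ) :
    MemLp (fun R => frob (A * Matrix.of R)) 2 (gaussMeasure n d) := by
  rw [memLp_two_iff_integrable_sq (continuous_frob_mul_of A).aestronglyMeasurable]
  simp only [frob_mul_sq_eq_sum_vecMul_dotProduct_vecMul]
  exact integrable_finsetSum _ fun i _ =>
    (memLp_vecMul_dotProduct_vecMul_gaussMeasure (A i) (A i)).integrable one_le_two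

lemma integral_frob_mul_sq_gaussMeasure (hd : d ≠ 0) {m : ℕ} (A : Matrix (Fin m) (Fin n) ℝ) :
    ∫ R, frob (A * Matrix.of R) ^ 2 ∂gaussMeasure n d = frob A ^ 2 := by
  simp only [frob_mul_sq_eq_sum_vecMul_dotProduct_vecMul]
  rw [integral_finsetSum _ fun i _ =>
    (memLp_vecMul_dotProduct_vecMul_gaussMeasure (A i) (A i)).integrable one_le_two]
  simp only [integral_vecMul_dotProduct_vecMul_gaussMeasure _ _ hd]
  rw [frob_sq_eq_sum]
  simp only [dotProduct, pow_two]

end GaussMeasure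

section ProjectedCost

variable {n k d : ℕ} {Φ : Matrix (Fin n) (Fin k) ℝ} (X : Matrix (Fin n) (Fin k) ℝ)

lemma memLp_kmeansCost_gaussMeasure :
    MemLp (fun R => kmeansCost (Φ * Φᵀ * Matrix.of R) X) 2 (gaussMeasure n d) := by
  simp only [kmeansCost_mul_transpose_mul]
  exact memLp_frob_mul_gaussMeasure _

lemma integral_kmeansCost_gaussMeasure_le (hd : d ≠ 0) (hΦ : Φᵀ * Φ = 1) :
    ∫ R, kmeansCost (Φ * Φᵀ * Matrix.of R) X ∂gaussMeasure n d ≤ kmeansCost Φ X := by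
  refine integral_le_of_integral_sq_le (memLp_kmeansCost_gaussMeasure X) (frob_nonneg _) ?_
  simp only [kmeansCost_mul_transpose_mul]
  rw [integral_frob_mul_sq_gaussMeasure hd, frob_mul_right hΦ, kmeansCost]

lemma gramError_apply (hΦ : Φᵀ * Φ = 1) (R : Matrix (Fin n) (Fin d) ℝ) (a b : Fin k) :
    gramError Φ R a b = (Φᵀ a ᵥ* R) ⬝ᵥ (Φᵀ b ᵥ* R) - Φᵀ a ⬝ᵥ Φᵀ b := by
  rw [gramError, ← hΦ]
  rfl

lemma memLp_gramError_apply_gaussMeasure (hΦ : Φᵀ * Φ = 1) (a b : Fin k) :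
    MemLp (fun R => gramError Φ (Matrix.of R) a b) 2 (gaussMeasure n d) := by
  simp only [gramError_apply hΦ]
  exact (memLp_vecMul_dotProduct_vecMul_gaussMeasure _ _).sub (memLp_const _)

lemma integral_gramError_apply_sq_gaussMeasure_le (hd : d ≠ 0) (hΦ : Φᵀ * Φ = 1) (a b : Fin k) :
    ∫ R, gramError Φ (Matrix.of R) a b ^ 2 ∂gaussMeasure n d ≤ 3 / d := by
  have hunit (a : Fin k) : Φᵀ a ⬝ᵥ Φᵀ a = 1 := (congrFun₂ hΦ a a).trans (Matrix.one_apply_eq a)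
  have hvar := variance_vecMul_dotProduct_vecMul_gaussMeasure_le (d := d) (Φᵀ a) (Φᵀ b)
  rw [variance_eq_integral (memLp_vecMul_dotProduct_vecMul_gaussMeasure _ _).aemeasurable,
    integral_vecMul_dotProduct_vecMul_gaussMeasure _ _ hd, hunit, hunit] at hvar
  norm_num at hvar
  simpa only [gramError_apply hΦ] using hvar

lemma memLp_frob_gramError_gaussMeasure (hΦ : Φᵀ * Φ = 1) :
    MemLp (fun R => frob (gramError Φ (Matrix.of R))) 2 (gaussMeasure n d) := by
  have hcont : Continuous fun R : Fin n → Fin d → ℝ => frob (gramError Φ (Matrix.of R)) := by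
    have hmul : Continuous fun R : Matrix (Fin n) (Fin d) ℝ => Φᵀ * R := by fun_prop
    exact continuous_frob.comp
      ((hmul.matrix_mul hmul.matrix_transpose).sub continuous_const)
  rw [memLp_two_iff_integrable_sq hcont.aestronglyMeasurable]
  simp only [frob_sq_eq_sum]
  exact integrable_finsetSum _ fun a _ => integrable_finsetSum _ fun b _ =>
    (memLp_gramError_apply_gaussMeasure hΦ a b).integrable_sq

lemma integral_frob_gramError_sq_gaussMeasure_le (hd : d ≠ 0) (hΦ : Φᵀ * Φ = 1) :
    ∫ R, frob (gramError Φ (Matrix.of R)) ^ 2 ∂gaussMeasure n d ≤ 3 * (k : ℝ) ^ 2 / d := by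
  have hint (a b : Fin k) := (memLp_gramError_apply_gaussMeasure (d := d) hΦ a b).integrable_sq
  simp only [frob_sq_eq_sum]
  rw [integral_finsetSum _ fun a _ => integrable_finsetSum _ fun b _ => hint a b]
  simp only [integral_finsetSum _ fun b _ => hint _ b]
  refine (Finset.sum_le_sum fun a _ => Finset.sum_le_sum fun b _ =>
    integral_gramError_apply_sq_gaussMeasure_le hd hΦ a b).trans_eq ?_
  simp only [Finset.sum_const, Finset.card_univ, Fintype.card_fin, nsmul_eq_mul]
  ring

end ProjectedCost

/-! ### Concentration of the deviation of the costs -/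

section Deviation

variable {n k d : ℕ} {Φ X X₀ : Matrix (Fin n) (Fin k) ℝ}

/-- A bound, uniform over the indicator matrices `X`, for the increase of the cost on `Φ` from `X₀`
to any `X` that does not cost more than `X₀` on the projected features `ΦΦᵀR`. -/
def costDeviation (Φ X₀ : Matrix (Fin n) (Fin k) ℝ) (R : Fin n → Fin d → ℝ) : ℝ :=
  (⨆ X : {X : Matrix (Fin n) (Fin k) ℝ // IsIndicator X},
    (kmeansCost Φ X.1 - kmeansCost (Φ * Φᵀ * Matrix.of R) X.1)) +
    (kmeansCost (Φ * Φᵀ * Matrix.of R) X₀ - kmeansCost Φ X₀)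

instance finite_isIndicator : Finite {X : Matrix (Fin n) (Fin k) ℝ // IsIndicator X} :=
  finite_setOf_isIndicator

lemma kmeansCost_sub_le_iSup (hX : IsIndicator X) (R : Fin n → Fin d → ℝ) :
    kmeansCost Φ X - kmeansCost (Φ * Φᵀ * Matrix.of R) X ≤
      ⨆ X : {X : Matrix (Fin n) (Fin k) ℝ // IsIndicator X},
        (kmeansCost Φ X.1 - kmeansCost (Φ * Φᵀ * Matrix.of R) X.1) :=
  le_ciSup (f := fun X : {X : Matrix (Fin n) (Fin k) ℝ // IsIndicator X} =>
    kmeansCost Φ X.1 - kmeansCost (Φ * Φᵀ * Matrix.of R) X.1) (Set.finite_range _).bddAbove ⟨X, hX⟩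

lemma IsOptAssign.kmeansCost_le_add_costDeviation {R : Fin n → Fin d → ℝ}
    (hX : IsOptAssign (Φ * Φᵀ * Matrix.of R) X) (hX₀ : IsIndicator X₀) :
    kmeansCost Φ X ≤ kmeansCost Φ X₀ + costDeviation Φ X₀ R := by
  have hsup := kmeansCost_sub_le_iSup (Φ := Φ) hX.1 R
  have hopt := hX.2 X₀ hX₀
  rw [costDeviation]
  linarith

lemma measurable_kmeansCost_mul_transpose_mul_of :
    Measurable fun R : Fin n → Fin d → ℝ => kmeansCost (Φ * Φᵀ * Matrix.of R) X := by
  simp only [kmeansCost_mul_transpose_mul]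
  exact (continuous_frob_mul_of _).measurable

lemma measurable_costDeviation : Measurable (costDeviation (d := d) Φ X₀) := by
  unfold costDeviation
  refine Measurable.add (Measurable.iSup fun X => ?_) ?_
  · exact measurable_const.sub measurable_kmeansCost_mul_transpose_mul_of
  · exact measurable_kmeansCost_mul_transpose_mul_of.sub measurable_const

lemma costDeviation_sub_costDeviation_le (hΦ : Φᵀ * Φ = 1) (hX₀ : IsIndicator X₀)
    (R S : Fin n → Fin d → ℝ) :
    costDeviation Φ X₀ R - costDeviation Φ X₀ S ≤ 2 * frob (Matrix.of R - Matrix.of S) := by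
  have : Nonempty {X : Matrix (Fin n) (Fin k) ℝ // IsIndicator X} := ⟨⟨X₀, hX₀⟩⟩
  have hsup : ⨆ X : {X : Matrix (Fin n) (Fin k) ℝ // IsIndicator X},
      (kmeansCost Φ X.1 - kmeansCost (Φ * Φᵀ * Matrix.of R) X.1) ≤
      (⨆ X : {X : Matrix (Fin n) (Fin k) ℝ // IsIndicator X},
        (kmeansCost Φ X.1 - kmeansCost (Φ * Φᵀ * Matrix.of S) X.1)) +
        frob (Matrix.of R - Matrix.of S) := ciSup_le fun ⟨X, hX⟩ => by
    have hlip := kmeansCost_sub_kmeansCost_le_frob hΦ hX.transpose_mul_self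
      (Matrix.of S) (Matrix.of R)
    rw [frob_sub_comm] at hlip
    linarith [kmeansCost_sub_le_iSup (Φ := Φ) hX S]
  have hlip := kmeansCost_sub_kmeansCost_le_frob hΦ hX₀.transpose_mul_self
    (Matrix.of R) (Matrix.of S)
  rw [costDeviation, costDeviation]
  linarith

lemma costDeviation_sub_costDeviation_sq_le (hΦ : Φᵀ * Φ = 1) (hX₀ : IsIndicator X₀)
    (R S : Fin n → Fin d → ℝ) :
    (costDeviation Φ X₀ R - costDeviation Φ X₀ S) ^ 2 ≤
      4 * frob (Matrix.of R - Matrix.of S) ^ 2 := by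
  have hRS := costDeviation_sub_costDeviation_le hΦ hX₀ R S
  have hSR := costDeviation_sub_costDeviation_le hΦ hX₀ S R
  rw [frob_sub_comm] at hSR
  calc (costDeviation Φ X₀ R - costDeviation Φ X₀ S) ^ 2 ≤
        (2 * frob (Matrix.of R - Matrix.of S)) ^ 2 :=
        sq_le_sq' (by linarith) hRS
    _ = 4 * frob (Matrix.of R - Matrix.of S) ^ 2 := by ring

lemma hasSubgaussianMGF_costDeviation (hd : d ≠ 0) (hΦ : Φᵀ * Φ = 1) (hX₀ : IsIndicator X₀) :
    HasSubgaussianMGF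
      (fun R => costDeviation Φ X₀ R - ∫ S, costDeviation Φ X₀ S ∂gaussMeasure n d)
      (8 / d) (gaussMeasure n d) := by
  refine (hasPropertyTau_gaussMeasure n d).hasSubgaussianMGF measurable_costDeviation
    (fun R S => by positivity) fun R S => ?_
  refine (costDeviation_sub_costDeviation_sq_le hΦ hX₀ R S).trans_eq ?_
  push_cast
  field_simp
  ring

lemma integrable_costDeviation (hd : d ≠ 0) (hΦ : Φᵀ * Φ = 1) (hX₀ : IsIndicator X₀) :
    Integrable (costDeviation Φ X₀) (gaussMeasure n d) :=
  ((hasSubgaussianMGF_costDeviation hd hΦ hX₀).integrable.add (integrable_const _)).congr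
    (ae_of_all _ fun _ => sub_add_cancel _ _)

lemma integral_costDeviation_le (hd : d ≠ 0) (hΦ : Φᵀ * Φ = 1) (hX₀ : IsIndicator X₀) :
    ∫ R, costDeviation Φ X₀ R ∂gaussMeasure n d ≤ 2 * √((k : ℝ) / d) * √k := by
  have : Nonempty {X : Matrix (Fin n) (Fin k) ℝ // IsIndicator X} := ⟨⟨X₀, hX₀⟩⟩
  have hcost : Integrable (fun R => kmeansCost (Φ * Φᵀ * Matrix.of R) X₀) (gaussMeasure n d) :=
    (memLp_kmeansCost_gaussMeasure X₀).integrable one_le_two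
  have hexcess : Integrable
      (fun R => kmeansCost (Φ * Φᵀ * Matrix.of R) X₀ - kmeansCost Φ X₀) (gaussMeasure n d) :=
    hcost.sub (integrable_const _)
  have hgram := memLp_frob_gramError_gaussMeasure (d := d) hΦ
  have hgram_int := hgram.integrable one_le_two
  have hdev (R : Fin n → Fin d → ℝ) : costDeviation Φ X₀ R ≤ frob (gramError Φ (Matrix.of R)) +
      (kmeansCost (Φ * Φᵀ * Matrix.of R) X₀ - kmeansCost Φ X₀) :=
    add_le_add_left (ciSup_le fun X => kmeansCost_sub_kmeansCost_le_frob_gramError hΦ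
      X.2.transpose_mul_self (Matrix.of R)) _
  have hgram_le : ∫ R, frob (gramError Φ (Matrix.of R)) ∂gaussMeasure n d ≤
      2 * √((k : ℝ) / d) * √k := by
    refine integral_le_of_integral_sq_le hgram (by positivity)
      ((integral_frob_gramError_sq_gaussMeasure_le hd hΦ).trans ?_)
    rw [mul_pow, mul_pow, Real.sq_sqrt (by positivity), Real.sq_sqrt (by positivity),
      mul_assoc, div_mul_eq_mul_div, ← pow_two, ← mul_div_assoc]
    gcongr
    norm_num
  calc ∫ R, costDeviation Φ X₀ R ∂gaussMeasure n d ≤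
      ∫ R, (frob (gramError Φ (Matrix.of R)) +
        (kmeansCost (Φ * Φᵀ * Matrix.of R) X₀ - kmeansCost Φ X₀)) ∂gaussMeasure n d :=
        integral_mono (integrable_costDeviation hd hΦ hX₀) (hgram_int.add hexcess) hdev
    _ = ∫ R, frob (gramError Φ (Matrix.of R)) ∂gaussMeasure n d +
        (∫ R, kmeansCost (Φ * Φᵀ * Matrix.of R) X₀ ∂gaussMeasure n d - kmeansCost Φ X₀) := by
        rw [integral_add hgram_int hexcess, integral_sub hcost (integrable_const _),
          integral_const, probReal_univ, one_smul]
    _ ≤ 2 * √((k : ℝ) / d) * √k := by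
        linarith [integral_kmeansCost_gaussMeasure_le X₀ hd hΦ]

lemma measureReal_costDeviation_ge_le (hd : d ≠ 0) (hΦ : Φᵀ * Φ = 1) (hX₀ : IsIndicator X₀)
    {t : ℝ} (ht : 0 ≤ t) :
    (gaussMeasure n d).real {R | 2 * √((k : ℝ) / d) * (√k + t) ≤ costDeviation Φ X₀ R} ≤
      Real.exp (-(k * t ^ 2) / 4) := by
  have hε : 0 ≤ 2 * √((k : ℝ) / d) * t := by positivity
  refine (measureReal_mono fun R hR => ?_).trans
    (((hasSubgaussianMGF_costDeviation hd hΦ hX₀).measure_ge_le hε).trans_eq ?_)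
  · have hmean := integral_costDeviation_le hd hΦ hX₀
    simp only [Set.mem_ofPred_eq] at hR ⊢
    linarith
  · rw [mul_pow, mul_pow, Real.sq_sqrt (by positivity)]
    congr 1
    push_cast
    field_simp
    ring

end Deviation

lemma ofReal_one_sub_le_measure_of_compl_subset {Ω : Type*} [MeasurableSpace Ω] {μ : Measure Ω}
    [IsProbabilityMeasure μ] {s t : Set Ω} {ε : ℝ} (hs : MeasurableSet s) (hst : sᶜ ⊆ t)
    (hε : μ.real s ≤ ε) : ENNReal.ofReal (1 - ε) ≤ μ t := by
  calc ENNReal.ofReal (1 - ε) ≤ ENNReal.ofReal (μ.real sᶜ) :=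
        ENNReal.ofReal_le_ofReal (by rw [probReal_compl_eq_one_sub hs]; linarith)
    _ = μ sᶜ := ofReal_measureReal
    _ ≤ μ t := measure_mono hst

/-- for Gaussian `R` with i.i.d. `N(0, 1/d)` entries, with probability at least
`1 − exp(−t²/2)` every minimizer `X` of the k-means cost on `Ψ = H R` satisfies
`C_Φ ≤ ‖Φ − X Xᵀ Φ‖_F ≤ C_Φ + 2√(k/d)(√k + t)`; the lower bound holds surely. -/
theorem statement4 {n k d : ℕ} (hnk : k ≤ n) (hkd : k ≤ d) (t : ℝ) (ht : 0 ≤ t)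
    (U : Matrix (Fin n) (Fin n) ℝ) (hU : Uᵀ * U = 1)
    (Φ : Matrix (Fin n) (Fin k) ℝ) (hΦ : Φ = U * rectId n k)
    (XΦ : Matrix (Fin n) (Fin k) ℝ) (hXΦ : IsOptAssign Φ XΦ) :
    (∀ R : Fin n → Fin d → ℝ, ∀ X : Matrix (Fin n) (Fin k) ℝ,
        IsOptAssign (Φ * Φᵀ * Matrix.of R) X → kmeansCost Φ XΦ ≤ kmeansCost Φ X) ∧
    ENNReal.ofReal (1 - Real.exp (-t ^ 2 / 2)) ≤
      gaussMeasure n d {R | ∀ X : Matrix (Fin n) (Fin k) ℝ,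
        IsOptAssign (Φ * Φᵀ * Matrix.of R) X →
          kmeansCost Φ X ≤ kmeansCost Φ XΦ +
            2 * Real.sqrt ((k : ℝ) / d) * (Real.sqrt k + t)} := by
  refine ⟨fun R X hX => hXΦ.2 X hX.1, ?_⟩
  rcases Nat.lt_or_ge 1 k with hk | hk
  · have hΦΦ : Φᵀ * Φ = 1 := hΦ ▸ transpose_mul_self_mul_rectId hU hnk
    have htail := measureReal_costDeviation_ge_le (d := d) (by lia) hΦΦ hXΦ.1 ht
    refine ofReal_one_sub_le_measure_of_compl_subset
      (measurableSet_le measurable_const measurable_costDeviation) (fun R hR X hX => ?_)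
      (htail.trans (Real.exp_le_exp.2 ?_))
    · have hdev : costDeviation Φ XΦ R < _ := not_le.1 hR
      exact (hX.kmeansCost_le_add_costDeviation hXΦ.1).trans (by gcongr)
    · have hk' : (2 : ℝ) ≤ k := by exact_mod_cast hk
      nlinarith [sq_nonneg t]
  · refine ofReal_one_sub_le_measure_of_compl_subset MeasurableSet.empty (fun R _ X hX => ?_)
      (measureReal_empty.trans_le (Real.exp_pos _).le)
    rw [hX.1.eq_of_le_one hk hXΦ.1]
    exact le_add_of_nonneg_right (by positivity)
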